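/- arXiv:2004.06989 — 2 statements merged into one kernel-verified Lean document; each statement's English description precedes it below -/
import Mathlib

section
/- Let f, φ: [-π,π]^d → ℂ with f(x) = ∑_{‖k‖_∞ ≤ K} c_k e^{i k·x} a multivariate trigonometric polynomial, and φ a periodic function with Fourier coefficients ζ_k satisfying |ζ_k| ≤ a/‖k‖₁^{d+1} for k ≠ 0. If f and φ agree on the uniform grid of n = (2K+1)^d points x_s = 2πs/(2K+1), s ∈ {0,…,2K}^d, then ‖f - φ‖²_{L²([-π,π]^d)} = O(1/n^{(d+2)/d}), with the constant depending on a and d. -/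
open Real MeasureTheory

namespace SamplingError

/-- The exponential character. -/
noncomputable def e {d : ℕ} (k : Fin d → ℤ) (x : Fin d → ℝ) : ℂ :=
  Complex.exp (Complex.I * ((∑ i, (k i : ℂ) * (x i : ℂ))))

lemma e_eq_prod {d : ℕ} (k : Fin d → ℤ) (x : Fin d → ℝ) :
    e k x = ∏ i, Complex.exp (Complex.I * ((k i : ℂ) * (x i : ℂ))) := by
  rw [e, Finset.mul_sum, Complex.exp_sum]

lemma norm_e {d : ℕ} (k : Fin d → ℤ) (x : Fin d → ℝ) : ‖e k x‖ = 1 := by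
  have : Complex.I * ((∑ i, (k i : ℂ) * (x i : ℂ))) = ((∑ i, (k i : ℝ) * x i : ℝ) : ℂ) * Complex.I := by
    push_cast; ring
  rw [e, this, Complex.norm_exp_ofReal_mul_I]

lemma e_add {d : ℕ} (k l : Fin d → ℤ) (x : Fin d → ℝ) : e (k + l) x = e k x * e l x := by
  rw [e, e, e, ← Complex.exp_add, ← mul_add, ← Finset.sum_add_distrib]
  simp [add_mul]

lemma e_zero {d : ℕ} (x : Fin d → ℝ) : e 0 x = 1 := by simp [e]

lemma e_at_zero {d : ℕ} (k : Fin d → ℤ) : e k 0 = 1 := by simp [e]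

lemma conj_e {d : ℕ} (k : Fin d → ℤ) (x : Fin d → ℝ) :
    (starRingEnd ℂ) (e k x) = e (-k) x := by
  rw [e, e, ← Complex.exp_conj]
  simp

lemma continuous_e {d : ℕ} (k : Fin d → ℤ) : Continuous (e k) := by
  unfold e; fun_prop

/-- Weight. -/
noncomputable def w {d : ℕ} (q : Fin d → ℤ) : ℝ := 1 / ((∑ i, |q i| : ℤ) : ℝ) ^ (d + 1)

lemma w_nonneg {d : ℕ} (q : Fin d → ℤ) : 0 ≤ w q := by
  have : (0:ℝ) ≤ ((∑ i, |q i| : ℤ) : ℝ) := by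
    exact_mod_cast Finset.sum_nonneg fun i _ => abs_nonneg _
  unfold w; positivity

lemma l1_pos {d : ℕ} {q : Fin d → ℤ} (hq : q ≠ 0) : 0 < ∑ i, |q i| := by
  obtain ⟨i, hi⟩ := Function.ne_iff.mp hq
  have h1 : 0 < |q i| := abs_pos.mpr hi
  exact h1.trans_le (Finset.single_le_sum (f := fun i => |q i|) (fun i _ => abs_nonneg _) (Finset.mem_univ i))

lemma summable_w (d : ℕ) : Summable (w : (Fin d → ℤ) → ℝ) := by
  let b := Pi.basisFun ℝ (Fin d)
  let L := Submodule.span ℤ (Set.range b)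
  have hL : Module.finrank ℤ L = d := by
    rw [ZLattice.rank ℝ L]; simp
  have h := ZLattice.summable_norm_pow_inv L (d + 1) (by omega)
  have hmem : ∀ k : Fin d → ℤ, (fun i => (k i : ℝ)) ∈ L := by
    intro k
    rw [Module.Basis.mem_span_iff_repr_mem ℤ b]
    intro i
    simp [b]
  let g : (Fin d → ℤ) → L := fun k => ⟨fun i => (k i : ℝ), hmem k⟩
  have hg : Function.Injective g := by
    intro k l hkl
    ext i
    have := congrFun (congrArg Subtype.val hkl) i
    simpa [g] using this
  refine Summable.of_nonneg_of_le w_nonneg ?_ (h.comp_injective hg)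
  intro k
  by_cases hk : k = 0
  · simp [w, hk, g]
  · have hp := l1_pos hk
    have h1 : ‖g k‖ ≤ ((∑ i, |k i| : ℤ) : ℝ) := by
      change ‖(fun i => (k i : ℝ))‖ ≤ _
      refine (pi_norm_le_iff_of_nonneg (by exact_mod_cast hp.le)).2 fun i => ?_
      rw [Real.norm_eq_abs]
      exact_mod_cast (Finset.single_le_sum (f := fun i => |k i|) (fun i _ => abs_nonneg _) (Finset.mem_univ i))
    have h2 : 0 < ‖g k‖ := by
      rw [norm_pos_iff]
      intro h0
      apply hk
      apply hg
      rw [h0]; ext i; simp [g]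
    simp only [Function.comp, w, one_div, inv_pow]
    gcongr

/-- The finite fiber bound. -/
lemma fiber_sum_le {α β γ : Type*} [DecidableEq β] [DecidableEq γ] (m : α → β) (q : α → γ)
    (hinj : ∀ x y, m x = m y → q x = q y → x = y) (v : γ → ℝ) (hv : ∀ x, 0 ≤ v x)
    (hs : Summable v) (s : Finset α) (b : β) :
    ∑ x ∈ s with m x = b, v (q x) ≤ ∑' x, v x := by
  rw [← Finset.sum_image (s := s.filter (fun x => m x = b)) (g := q) (f := v)]
  · exact hs.sum_le_tsum _ fun x _ => hv x
  · intro x hx y hy hxy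
    simp at hx hy
    exact hinj x y (hx.2.trans hy.2.symm) hxy

lemma char_sum_one (N : ℕ) (hN : 0 < N) (j : ℤ) :
    ∑ s ∈ Finset.range N, Complex.exp (Complex.I * ((j : ℂ) * ((2 * π * s / N : ℝ) : ℂ))) =
      if (N : ℤ) ∣ j then (N : ℂ) else 0 := by
  have hN0 : (N : ℂ) ≠ 0 := by exact_mod_cast hN.ne'
  set z := Complex.exp (2 * π * Complex.I / N) with hz
  have hp := Complex.isPrimitiveRoot_exp N hN.ne'
  have hterm : ∀ s : ℕ, Complex.exp (Complex.I * ((j : ℂ) * ((2 * π * s / N : ℝ) : ℂ))) = (z ^ j) ^ s := by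
    intro s
    rw [hz, ← Complex.exp_int_mul, ← Complex.exp_nat_mul]
    congr 1; push_cast; field_simp
  simp_rw [hterm]
  split_ifs with h
  · rw [(hp.zpow_eq_one_iff_dvd j).2 h]; simp
  · have h1 : z ^ j ≠ 1 := fun h' => h ((hp.zpow_eq_one_iff_dvd j).1 h')
    rw [geom_sum_eq h1, ← zpow_natCast, ← zpow_mul, mul_comm, zpow_mul, zpow_natCast, hp.pow_eq_one]
    simp

lemma char_sum {d : ℕ} (N : ℕ) (hN : 0 < N) (j : Fin d → ℤ) :
    ∑ s ∈ Fintype.piFinset (fun _ : Fin d => Finset.range N), e j (fun i => 2 * π * s i / N) =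
      if (∀ i, (N : ℤ) ∣ j i) then (N : ℂ) ^ d else 0 := by
  simp_rw [e_eq_prod]
  rw [← Finset.prod_univ_sum (fun _ : Fin d => Finset.range N)
    (fun i (s : ℕ) => Complex.exp (Complex.I * ((j i : ℂ) * ((2 * π * s / N : ℝ) : ℂ))))]
  simp_rw [char_sum_one N hN]
  split_ifs with h
  · simp [h]
  · push Not at h
    obtain ⟨i, hi⟩ := h
    exact Finset.prod_eq_zero (Finset.mem_univ i) (by simp [hi])

lemma integral_one (j : ℤ) :
    ∫ x in Set.Icc (-π) π, Complex.exp (Complex.I * ((j : ℂ) * (x : ℂ))) =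
      if j = 0 then (2 * π : ℂ) else 0 := by
  rw [integral_Icc_eq_integral_Ioc, ← intervalIntegral.integral_of_le (by linarith [pi_pos])]
  split_ifs with h
  · simp [h]; ring
  · have hj : Complex.I * (j : ℂ) ≠ 0 := by simp [h]
    simp_rw [← mul_assoc]
    rw [integral_exp_mul_complex hj]
    have : Complex.exp (Complex.I * j * (π : ℝ)) = Complex.exp (Complex.I * j * (-π : ℝ)) := by
      rw [Complex.exp_eq_exp_iff_exists_int]
      exact ⟨j, by push_cast; ring⟩
    rw [this]; simp

lemma integral_e {d : ℕ} (j : Fin d → ℤ) :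
    ∫ x in Set.univ.pi (fun _ : Fin d => Set.Icc (-π) π), e j x =
      if j = 0 then ((2 * π : ℂ)) ^ d else 0 := by
  simp_rw [e_eq_prod]
  rw [volume_pi, Measure.restrict_pi_pi,
    integral_fintype_prod_eq_prod (fun i (x : ℝ) => Complex.exp (Complex.I * ((j i : ℂ) * (x : ℂ))))]
  simp_rw [integral_one]
  split_ifs with h
  · simp [h]
  · obtain ⟨i, hi⟩ := Function.ne_iff.mp h
    exact Finset.prod_eq_zero (Finset.mem_univ i) (by simpa using hi)

lemma parseval {d : ℕ} (η : (Fin d → ℤ) → ℂ) (hη : Summable fun k => ‖η k‖) (g : (Fin d → ℝ) → ℂ)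
    (hg : ∀ x, HasSum (fun k => η k * e k x) (g x)) :
    HasSum (fun k => (2 * π) ^ d * ‖η k‖ ^ 2)
      (∫ x in Set.univ.pi (fun _ : Fin d => Set.Icc (-π) π), ‖g x‖ ^ 2) := by
  set Q := Set.univ.pi (fun _ : Fin d => Set.Icc (-π) π) with hQ
  have hQc : IsCompact Q := isCompact_univ_pi fun _ => isCompact_Icc
  have : IsFiniteMeasure (volume.restrict Q) := ⟨by simpa using hQc.measure_lt_top⟩
  let F : (Fin d → ℤ) × (Fin d → ℤ) → (Fin d → ℝ) → ℂ := fun p x =>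
    (η p.1 * (starRingEnd ℂ) (η p.2)) * e (p.1 - p.2) x
  have hFx : ∀ p x, F p x = (η p.1 * e p.1 x) * (starRingEnd ℂ) (η p.2 * e p.2 x) := by
    intro p x
    simp only [F, map_mul, conj_e, sub_eq_add_neg, e_add]; ring
  have hnorm : ∀ p x, ‖F p x‖ = ‖η p.1‖ * ‖η p.2‖ := by
    intro p x; simp [F, norm_e]
  have hprod : Summable fun p : (Fin d → ℤ) × (Fin d → ℤ) => ‖η p.1‖ * ‖η p.2‖ :=
    hη.mul_of_nonneg hη (fun _ => norm_nonneg _) (fun _ => norm_nonneg _)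
  have hint : ∀ p, Integrable (F p) (volume.restrict Q) := by
    intro p
    refine Integrable.of_bound (C := ‖η p.1‖ * ‖η p.2‖) ?_ (Filter.Eventually.of_forall fun x => (hnorm p x).le)
    exact ((continuous_const.mul (continuous_e _)).aestronglyMeasurable)
  have hsum : Summable fun p => ∫ x, ‖F p x‖ ∂(volume.restrict Q) := by
    simp_rw [hnorm]
    simp only [integral_const, smul_eq_mul]
    exact hprod.mul_left _
  have H := hasSum_integral_of_summable_integral_norm hint hsum
  have hts : ∀ x, ∑' p, F p x = ((‖g x‖ ^ 2 : ℝ) : ℂ) := by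
    intro x
    simp_rw [hFx]
    have h1 := hg x
    have h2 := (h1.star)
    have hS : Summable fun p : (Fin d → ℤ) × (Fin d → ℤ) =>
        (η p.1 * e p.1 x) * star (η p.2 * e p.2 x) := by
      refine Summable.of_norm ?_
      simpa [norm_e] using hprod
    have h3 := (h1.mul h2 hS).tsum_eq
    refine h3.trans ?_
    change g x * (starRingEnd ℂ) (g x) = _
    rw [Complex.mul_conj, Complex.normSq_eq_norm_sq]
  simp_rw [hts] at H
  rw [integral_complex_ofReal] at H
  have hF : ∀ p, ∫ x, F p x ∂(volume.restrict Q) =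
      if p.1 = p.2 then (((2 * π) ^ d * ‖η p.1‖ ^ 2 : ℝ) : ℂ) else 0 := by
    intro p
    simp only [F]
    rw [integral_const_mul, integral_e]
    by_cases h : p.1 = p.2
    · simp only [h, sub_self, if_true, Complex.mul_conj, Complex.normSq_eq_norm_sq]
      push_cast; ring
    · simp [h, sub_eq_zero]
  simp_rw [hF] at H
  have hdiag : Function.Injective (fun k : Fin d → ℤ => (k, k)) := fun k l h => (Prod.mk.inj h).1
  rw [← hdiag.hasSum_iff] at H
  · simp only [Function.comp_def, if_true] at H
    exact_mod_cast H
  · rintro ⟨k, l⟩ hkl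
    rw [if_neg]
    intro h
    exact hkl ⟨k, by simpa using h⟩

/-- Balanced residue. -/
def mm {d : ℕ} (K : ℕ) (k : Fin d → ℤ) : Fin d → ℤ := fun i => (k i).bmod (2 * K + 1)

/-- Balanced quotient. -/
def qq {d : ℕ} (K : ℕ) (k : Fin d → ℤ) : Fin d → ℤ := fun i => (k i).bdiv (2 * K + 1)

/-- The band. -/
noncomputable def band (d K : ℕ) : Finset (Fin d → ℤ) :=
  Fintype.piFinset (fun _ : Fin d => Finset.Icc (-(K : ℤ)) (K : ℤ))

lemma mem_band {d K : ℕ} {k : Fin d → ℤ} : k ∈ band d K ↔ ∀ i, -(K : ℤ) ≤ k i ∧ k i ≤ K := by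
  simp [band]

lemma decomp {d : ℕ} (K : ℕ) (k : Fin d → ℤ) (i : Fin d) :
    k i = mm K k i + (2 * K + 1) * qq K k i := by
  have := Int.bmod_add_bdiv (k i) (2 * K + 1)
  push_cast at this
  exact this.symm

lemma mm_mem {d : ℕ} (K : ℕ) (k : Fin d → ℤ) : mm K k ∈ band d K := by
  rw [mem_band]
  intro i
  have h1 := Int.le_bmod (x := k i) (m := 2 * K + 1) (by omega)
  have h2 := Int.bmod_lt (x := k i) (m := 2 * K + 1) (by omega)
  unfold mm
  constructor <;> omega

lemma eq_of_dvd {K : ℕ} {m n : ℤ} (h1 : -(K : ℤ) ≤ m ∧ m ≤ K) (h2 : -(K : ℤ) ≤ n ∧ n ≤ K)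
    (h : ((2 * K + 1 : ℕ) : ℤ) ∣ m - n) : m = n := by
  have := Int.eq_zero_of_abs_lt_dvd h (by rw [abs_lt]; push_cast; omega)
  omega

lemma mm_eq_iff {d : ℕ} {K : ℕ} (k m : Fin d → ℤ) (hm : m ∈ band d K) :
    (∀ i, ((2 * K + 1 : ℕ) : ℤ) ∣ (k - m) i) ↔ mm K k = m := by
  have hk := mem_band.1 (mm_mem K k)
  rw [mem_band] at hm
  constructor
  · intro h
    ext i
    apply eq_of_dvd (hk i) (hm i)
    have h3 := h i
    have h4 := decomp K k i
    have : mm K k i - m i = (k - m) i - ((2 * K + 1 : ℕ) : ℤ) * qq K k i := by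
      simp only [Pi.sub_apply]; push_cast; linarith
    rw [this]
    exact dvd_sub h3 (dvd_mul_right _ _)
  · intro h i
    refine ⟨qq K k i, ?_⟩
    have h4 := decomp K k i
    rw [h] at h4
    simp only [Pi.sub_apply]; push_cast; linarith

lemma mm_of_mem {d : ℕ} {K : ℕ} {k : Fin d → ℤ} (hk : k ∈ band d K) : mm K k = k :=
  (mm_eq_iff k k hk).1 (by simp)

lemma mm_qq_inj {d : ℕ} (K : ℕ) (k l : Fin d → ℤ) (h1 : mm K k = mm K l) (h2 : qq K k = qq K l) :
    k = l := by
  ext i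
  rw [decomp K k i, decomp K l i, h1, h2]

lemma l1_lower {d : ℕ} (K : ℕ) (k : Fin d → ℤ) :
    (2 * K + 1) * ∑ i, |qq K k i| ≤ 2 * ∑ i, |k i| := by
  rw [Finset.mul_sum, Finset.mul_sum]
  refine Finset.sum_le_sum fun i _ => ?_
  have h1 := decomp K k i
  have h2 := mem_band.1 (mm_mem K k) i
  generalize qq K k i = q at *
  generalize mm K k i = m at *
  rw [h1]
  rcases lt_trichotomy q 0 with hq | rfl | hq
  · rw [abs_of_neg hq]
    have := neg_abs_le (m + (2 * K + 1) * q)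
    nlinarith
  · simp
  · rw [abs_of_pos hq]
    have := le_abs_self (m + (2 * K + 1) * q)
    nlinarith

lemma zeta_bound {d : ℕ} {a : ℝ} (ha : 0 < a) (K : ℕ) (k : Fin d → ℤ) (hk : k ∉ band d K) (z : ℂ)
    (hz : ‖z‖ ≤ a / ((∑ i, |k i| : ℤ) : ℝ) ^ (d + 1)) :
    ‖z‖ ≤ a * (2 / ((2 * K + 1 : ℕ) : ℝ)) ^ (d + 1) * w (qq K k) := by
  have hq : qq K k ≠ 0 := by
    intro h
    apply hk
    have : k = mm K k := by
      ext i
      rw [decomp K k i, h]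
      have := decomp K k i
      rw [h] at this
      simp at this ⊢
    rw [this]; exact mm_mem K k
  have hp : (0 : ℝ) < ((∑ i, |qq K k i| : ℤ) : ℝ) := by exact_mod_cast l1_pos hq
  have hl : (((2 * K + 1 : ℕ) : ℝ)) * ((∑ i, |qq K k i| : ℤ) : ℝ) ≤ 2 * ((∑ i, |k i| : ℤ) : ℝ) := by
    exact_mod_cast l1_lower K k
  have hN : (0 : ℝ) < ((2 * K + 1 : ℕ) : ℝ) := by positivity
  refine hz.trans ?_
  calc a / ((∑ i, |k i| : ℤ) : ℝ) ^ (d + 1)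
      ≤ a / (((2 * K + 1 : ℕ) : ℝ) / 2 * ((∑ i, |qq K k i| : ℤ) : ℝ)) ^ (d + 1) := by
        gcongr
        linarith
    _ = _ := by
        unfold w
        rw [mul_pow, div_pow, div_pow]
        field_simp

lemma folding_hasSum {d : ℕ} (K : ℕ) (η : (Fin d → ℤ) → ℂ)
    (h : ∀ s : Fin d → ℕ, (∀ i, s i ≤ 2 * K) →
      HasSum (fun k => η k * e k (fun i => 2 * π * s i / (2 * K + 1 : ℕ))) 0)
    (m : Fin d → ℤ) (hm : m ∈ band d K) :
    HasSum (fun k => if mm K k = m then η k else 0) 0 := by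
  have hN : ((2 * K + 1 : ℕ) : ℂ) ^ d ≠ 0 := pow_ne_zero _ (Nat.cast_ne_zero.2 (by omega))
  have h1 : HasSum (fun k => ∑ s ∈ Fintype.piFinset (fun _ : Fin d => Finset.range (2 * K + 1)),
      η k * e k (fun i => 2 * π * s i / (2 * K + 1 : ℕ)) *
        e (-m) (fun i => 2 * π * s i / (2 * K + 1 : ℕ)))
      (∑ s ∈ Fintype.piFinset (fun _ : Fin d => Finset.range (2 * K + 1)),
        0 * e (-m) (fun i => 2 * π * s i / (2 * K + 1 : ℕ))) := by
    refine hasSum_sum fun s hs => ?_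
    refine (h s fun i => ?_).mul_right _
    have := Fintype.mem_piFinset.1 hs i
    simp at this
    omega
  simp only [zero_mul, Finset.sum_const_zero] at h1
  have h2 := h1.mul_right ((((2 * K + 1 : ℕ) : ℂ) ^ d)⁻¹)
  rw [zero_mul] at h2
  refine h2.congr_fun ?_
  intro k
  simp_rw [mul_assoc (η k), ← e_add, ← sub_eq_add_neg]
  rw [← Finset.mul_sum, char_sum (2 * K + 1) (by omega) (k - m)]
  simp only [mm_eq_iff k m hm]
  split_ifs
  · field_simp
  · simp

lemma main_bound (d : ℕ) (a : ℝ) (ha : 0 < a) (K : ℕ) (c ζ : (Fin d → ℤ) → ℂ)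
    (f φ : (Fin d → ℝ) → ℂ)
    (hf : ∀ x : Fin d → ℝ, f x = ∑ k ∈ band d K, c k * e k x)
    (hφ : ∀ x : Fin d → ℝ, HasSum (fun k : Fin d → ℤ => ζ k * e k x) (φ x))
    (hζ : ∀ k : Fin d → ℤ, k ≠ 0 → ‖ζ k‖ ≤ a / ((∑ i, |k i| : ℤ) : ℝ) ^ (d + 1))
    (hgrid : ∀ s : Fin d → ℕ, (∀ i, s i ≤ 2 * K) →
        f (fun i => 2 * π * s i / (2 * K + 1)) = φ (fun i => 2 * π * s i / (2 * K + 1))) :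
    ∫ x in Set.univ.pi (fun _ : Fin d => Set.Icc (-π) π), ‖f x - φ x‖ ^ 2 ≤
      (2 * π) ^ d * (((2 * K + 1 : ℕ) : ℝ) ^ d *
        ((a * (2 / ((2 * K + 1 : ℕ) : ℝ)) ^ (d + 1)) ^ 2 *
          ((∑' q : Fin d → ℤ, w q) ^ 2 + ∑' q : Fin d → ℤ, w q ^ 2))) := by
  classical
  set D := a * (2 / ((2 * K + 1 : ℕ) : ℝ)) ^ (d + 1) with hD
  have hD0 : 0 ≤ D := by positivity
  set S := ∑' q : Fin d → ℤ, w q with hS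
  set T := ∑' q : Fin d → ℤ, w q ^ 2 with hT
  have hS0 : 0 ≤ S := tsum_nonneg w_nonneg
  have hsw2 : Summable fun q : Fin d → ℤ => w q ^ 2 := by
    have := (summable_w d).mul_of_nonneg (summable_w d) w_nonneg w_nonneg
    have h2 := this.comp_injective (i := fun k : Fin d → ℤ => (k, k))
      (fun k l h => (Prod.mk.inj h).1)
    simpa [Function.comp_def, sq] using h2
  let η : (Fin d → ℤ) → ℂ := fun k => (if k ∈ band d K then c k else 0) - ζ k
  have hη : ∀ x, HasSum (fun k => η k * e k x) (f x - φ x) := by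
    intro x
    have h1 : HasSum (fun k => (if k ∈ band d K then c k else 0) * e k x) (f x) := by
      rw [hf x]
      have := hasSum_sum_of_ne_finset_zero (L := SummationFilter.unconditional _) (f := fun k => (if k ∈ band d K then c k else 0) * e k x)
        (s := band d K) (fun k hk => by simp [hk])
      convert this using 1
      exact Finset.sum_congr rfl fun k hk => by simp [hk]
    refine (h1.sub (hφ x)).congr_fun ?_
    intro k
    simp only [η]; ring
  have hηs : Summable fun k => ‖η k‖ := by
    have := (hη 0).summable
    simp only [e_at_zero, mul_one] at this
    exact this.norm
  have hP := parseval η hηs (fun x => f x - φ x) hη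
  have hout : ∀ k, k ∉ band d K → ‖η k‖ ≤ D * w (qq K k) := by
    intro k hk
    have hk0 : k ≠ 0 := by
      rintro rfl
      exact hk (mem_band.2 fun i => by simp)
    simp only [η, if_neg hk, zero_sub, norm_neg]
    exact zeta_bound ha K k hk _ (hζ k hk0)
  have hin : ∀ m, m ∈ band d K → ‖η m‖ ≤ D * S := by
    intro m hm
    have h0 := folding_hasSum K η (fun s hs => by
      have := hη (fun i => 2 * π * s i / (2 * K + 1 : ℕ))
      have hg := hgrid s hs
      push_cast at this ⊢
      rw [hg, sub_self] at this
      exact this) m hm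
    have h1 := hasSum_ite_sub_hasSum h0 m
    rw [if_pos (mm_of_mem hm), zero_sub] at h1
    have h2 := h1.norm
    rw [norm_neg] at h2
    refine le_of_tendsto h2 (Filter.Eventually.of_forall fun t => ?_)
    refine (norm_sum_le _ _).trans ?_
    calc _ ≤ ∑ k ∈ t, (if mm K k = m then D * w (qq K k) else 0) := by
          refine Finset.sum_le_sum fun k _ => ?_
          by_cases hkm : k = m
          · simp only [hkm, if_true, norm_zero]
            split_ifs
            · exact mul_nonneg hD0 (w_nonneg _)
            · exact le_rfl
          · rw [if_neg hkm]
            split_ifs with h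
            · refine hout k fun hk => hkm ?_
              rw [← h, mm_of_mem hk]
            · simp
      _ = D * ∑ k ∈ t with mm K k = m, w (qq K k) := by
          rw [← Finset.sum_filter, Finset.mul_sum]
      _ ≤ D * S := by
          gcongr
          exact fiber_sum_le (mm K) (qq K) (mm_qq_inj K) w w_nonneg (summable_w d) t m
  have hall : ∀ k, ‖η k‖ ^ 2 ≤ (if k ∈ band d K then (D * S) ^ 2 else 0) + D ^ 2 * w (qq K k) ^ 2 := by
    intro k
    split_ifs with h
    · have := pow_le_pow_left₀ (norm_nonneg _) (hin k h) 2
      nlinarith [mul_nonneg (sq_nonneg D) (sq_nonneg (w (qq K k)))]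
    · have := pow_le_pow_left₀ (norm_nonneg _) (hout k h) 2
      rw [mul_pow] at this
      linarith
  have hcard : ((band d K).card : ℝ) = ((2 * K + 1 : ℕ) : ℝ) ^ d := by
    rw [band, Fintype.card_piFinset_const]
    have : (Finset.Icc (-(K : ℤ)) (K : ℤ)).card = 2 * K + 1 := by
      rw [Int.card_Icc]; omega
    rw [this]; push_cast; simp
  refine hasSum_le_of_sum_le hP fun t => ?_
  rw [← Finset.mul_sum]
  gcongr
  calc ∑ k ∈ t, ‖η k‖ ^ 2
      ≤ ∑ k ∈ t, ((if k ∈ band d K then (D * S) ^ 2 else 0) + D ^ 2 * w (qq K k) ^ 2) :=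
        Finset.sum_le_sum fun k _ => hall k
    _ = ∑ k ∈ t with k ∈ band d K, (D * S) ^ 2 + D ^ 2 * ∑ k ∈ t, w (qq K k) ^ 2 := by
        rw [Finset.sum_add_distrib, ← Finset.sum_filter, Finset.mul_sum]
    _ ≤ ∑ k ∈ band d K, (D * S) ^ 2 + D ^ 2 * ∑ b ∈ band d K, T := by
        gcongr
        · intro k hk
          exact (Finset.mem_filter.1 hk).2
        · rw [← Finset.sum_fiberwise_of_maps_to (s := t) (t := band d K) (g := mm K)
            (fun k _ => mm_mem K k)]
          exact Finset.sum_le_sum fun b _ => fiber_sum_le (mm K) (qq K) (mm_qq_inj K)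
            (fun q => w q ^ 2) (fun _ => sq_nonneg _) hsw2 t b
    _ = _ := by
        simp only [Finset.sum_const, nsmul_eq_mul, hcard]
        ring

end SamplingError

/-- Multivariate uniform-sampling error bound: for every dimension `d ≥ 1` and decay
constant `a > 0` there is `C > 0` such that, whenever a multivariate trigonometric
polynomial `f(x) = ∑_{‖k‖_∞ ≤ K} c_k e^{i k·x}` agrees on the uniform grid of
`n = (2K+1)^d` points with a periodic function `φ` whose Fourier coefficients satisfy
`|ζ_k| ≤ a/‖k‖₁^{d+1}` for `k ≠ 0`, one has
`‖f - φ‖²_{L²([-π,π]^d)} ≤ C / n^{(d+2)/d}`. -/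
theorem multivariate_uniform_sampling_error (d : ℕ) (hd : 1 ≤ d) (a : ℝ) (ha : 0 < a) :
    ∃ C : ℝ, 0 < C ∧ ∀ (K : ℕ) (c ζ : (Fin d → ℤ) → ℂ) (f φ : (Fin d → ℝ) → ℂ),
      (∀ x : Fin d → ℝ, f x = ∑ k ∈ Fintype.piFinset (fun _ : Fin d =>
          Finset.Icc (-(K : ℤ)) (K : ℤ)),
        c k * Complex.exp (Complex.I * ((∑ i, (k i : ℂ) * (x i : ℂ))))) →
      (∀ x : Fin d → ℝ, HasSum (fun k : Fin d → ℤ =>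
          ζ k * Complex.exp (Complex.I * ((∑ i, (k i : ℂ) * (x i : ℂ))))) (φ x)) →
      (∀ k : Fin d → ℤ, k ≠ 0 →
        ‖ζ k‖ ≤ a / ((∑ i, |k i| : ℤ) : ℝ) ^ (d + 1)) →
      (∀ s : Fin d → ℕ, (∀ i, s i ≤ 2 * K) →
        f (fun i => 2 * π * s i / (2 * K + 1)) = φ (fun i => 2 * π * s i / (2 * K + 1))) →
      ∫ x in Set.univ.pi (fun _ : Fin d => Set.Icc (-π) π), ‖f x - φ x‖ ^ 2 ≤
        C / (((2 * K + 1) ^ d : ℕ) : ℝ) ^ (((d : ℝ) + 2) / (d : ℝ)) := by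
  have hS0 : 0 ≤ ∑' q : Fin d → ℤ, SamplingError.w q := tsum_nonneg SamplingError.w_nonneg
  have hT0 : 0 ≤ ∑' q : Fin d → ℤ, SamplingError.w q ^ 2 := tsum_nonneg fun q => sq_nonneg _
  refine ⟨(2 * π) ^ d * (a ^ 2 * 2 ^ (2 * d + 2) * ((∑' q : Fin d → ℤ, SamplingError.w q) ^ 2 +
    ∑' q : Fin d → ℤ, SamplingError.w q ^ 2)) + 1, by positivity, ?_⟩
  intro K c ζ f φ hf hφ hζ hgrid
  have hN : (0 : ℝ) < ((2 * K + 1 : ℕ) : ℝ) := by positivity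
  have hpow : (((2 * K + 1) ^ d : ℕ) : ℝ) ^ (((d : ℝ) + 2) / (d : ℝ)) = ((2 * K + 1 : ℕ) : ℝ) ^ (d + 2) := by
    have hd0 : (d : ℝ) ≠ 0 := by positivity
    rw [Nat.cast_pow, ← Real.rpow_natCast, ← Real.rpow_mul hN.le, ← Real.rpow_natCast]
    congr 1
    push_cast
    field_simp
  rw [hpow]
  refine (SamplingError.main_bound d a ha K c ζ f φ hf hφ hζ hgrid).trans ?_
  rw [le_div_iff₀ (by positivity)]
  have key : ((2 * K + 1 : ℕ) : ℝ) ^ d * (a * (2 / ((2 * K + 1 : ℕ) : ℝ)) ^ (d + 1)) ^ 2 *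
      ((2 * K + 1 : ℕ) : ℝ) ^ (d + 2) = a ^ 2 * 2 ^ (2 * d + 2) := by
    rw [div_pow]
    field_simp
    ring
  calc _ = (2 * π) ^ d * ((((2 * K + 1 : ℕ) : ℝ) ^ d * (a * (2 / ((2 * K + 1 : ℕ) : ℝ)) ^ (d + 1)) ^ 2 *
      ((2 * K + 1 : ℕ) : ℝ) ^ (d + 2)) * ((∑' q : Fin d → ℤ, SamplingError.w q) ^ 2 +
    ∑' q : Fin d → ℤ, SamplingError.w q ^ 2)) := by ring
    _ ≤ _ := by rw [key]; linarith
end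

section
/- If a 2π-periodic function φ has Fourier coefficients ζ_k with |ζ_k| ≤ a/k² for all k ≠ 0, and f is a trigonometric polynomial of degree K that agrees with φ at n ≥ 2K+1 equispaced points in [-π,π), then ‖f − φ‖²_{L²[-π,π]} ≤ C a²/n³ for an absolute constant C (independent of K, n, f, φ). -/
open Real

lemma orth (m : ℤ) : ∫ x in (-π)..π, Complex.exp (Complex.I * (m : ℂ) * (x : ℂ)) = if m = 0 then 2 * (π:ℂ) else 0 := by
  split_ifs with h
  · subst h; simp; ring
  · rw [integral_exp_mul_complex (by simp [h])]
    have : Complex.exp (Complex.I * m * (π:ℝ)) = Complex.exp (Complex.I * m * (-π : ℝ)) := by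
      rw [Complex.exp_eq_exp_iff_exists_int]
      refine ⟨m, by push_cast; ring⟩
    rw [this]; simp

lemma nrm (m : ℤ) (x : ℝ) : ‖Complex.exp (Complex.I * (m : ℂ) * (x : ℂ))‖ = 1 := by
  have : Complex.I * (m : ℂ) * (x : ℂ) = ((m * x : ℝ) : ℂ) * Complex.I := by push_cast; ring
  rw [this, Complex.norm_exp_ofReal_mul_I]

lemma ivl {d : ℤ → ℂ} (hd : Summable fun k => ‖d k‖) (F : ℤ → ℝ → ℂ) (hF : ∀ k, Continuous (F k))
    (B : ℝ) (hB : ∀ k x, ‖F k x‖ ≤ B * ‖d k‖) {g : ℝ → ℂ} (hg : ∀ x, HasSum (fun k => F k x) (g x)) :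
    HasSum (fun k => ∫ x in (-π)..π, F k x) (∫ x in (-π)..π, g x) := by
  refine intervalIntegral.hasSum_integral_of_dominated_convergence (fun k _ => B * ‖d k‖) ?_ ?_ ?_ ?_ ?_
  · intro k; exact (hF k).aestronglyMeasurable
  · intro k; exact Filter.Eventually.of_forall fun x _ => hB k x
  · exact Filter.Eventually.of_forall fun x _ => hd.mul_left B
  · simp
  · exact Filter.Eventually.of_forall fun x _ => hg x

lemma parseval {d : ℤ → ℂ} (hd : Summable fun k => ‖d k‖) {g : ℝ → ℂ}
    (hg : ∀ x : ℝ, HasSum (fun k : ℤ => d k * Complex.exp (Complex.I * (k : ℂ) * (x : ℂ))) (g x)) :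
    HasSum (fun k => 2 * π * ‖d k‖ ^ 2) (∫ x in (-π)..π, ‖g x‖ ^ 2) := by
  have hgc : Continuous g := by
    have : g = fun x : ℝ => ∑' k : ℤ, d k * Complex.exp (Complex.I * (k : ℂ) * (x : ℂ)) := by
      ext x; exact (hg x).tsum_eq.symm
    rw [this]
    refine continuous_tsum (fun k => by fun_prop) hd ?_
    intro k x; rw [norm_mul, nrm, mul_one]
  have hgb : ∀ x, ‖g x‖ ≤ ∑' k, ‖d k‖ := by
    intro x
    rw [← (hg x).tsum_eq]
    refine tsum_of_norm_bounded hd.hasSum ?_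
    intro k; rw [norm_mul, nrm, mul_one]
  have hcoef : ∀ m : ℤ, ∫ x in (-π)..π, g x * Complex.exp (Complex.I * ((-m : ℤ) : ℂ) * (x : ℂ)) = 2 * π * d m := by
    intro m
    have h := ivl hd (fun k x => d k * Complex.exp (Complex.I * (k : ℂ) * (x : ℂ)) * Complex.exp (Complex.I * ((-m : ℤ) : ℂ) * (x : ℂ)))
      (fun k => by fun_prop) 1 (fun k x => by rw [norm_mul, norm_mul, nrm, nrm]; simp)
      (fun x => (hg x).mul_right _)
    refine h.unique ?_
    convert hasSum_ite_eq m (2 * π * d m) using 2 with k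
    have : ∀ x : ℝ, d k * Complex.exp (Complex.I * (k : ℂ) * (x : ℂ)) * Complex.exp (Complex.I * ((-m : ℤ) : ℂ) * (x : ℂ)) = d k * Complex.exp (Complex.I * ((k - m : ℤ) : ℂ) * (x : ℂ)) := by
      intro x
      rw [mul_assoc, ← Complex.exp_add]; congr 2; push_cast; ring
    simp_rw [this]
    rw [intervalIntegral.integral_const_mul, orth]
    by_cases h : k = m
    · subst h; simp; ring
    · simp [h, sub_eq_zero]
  have h := ivl hd (fun k x => (d k * Complex.exp (Complex.I * (k : ℂ) * (x : ℂ))) * (starRingEnd ℂ) (g x))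
      (fun k => by fun_prop) (∑' k, ‖d k‖)
      (fun k x => by
        rw [norm_mul, norm_mul, nrm, RCLike.norm_conj, mul_one, mul_comm]
        exact mul_le_mul_of_nonneg_right (hgb x) (norm_nonneg _))
      (fun x => (hg x).mul_right _)
  have e1 : ∀ k : ℤ, ∫ x in (-π)..π, (d k * Complex.exp (Complex.I * (k : ℂ) * (x : ℂ))) * (starRingEnd ℂ) (g x) = ((2 * π * ‖d k‖ ^ 2 : ℝ) : ℂ) := by
    intro k
    have : ∀ x : ℝ, (d k * Complex.exp (Complex.I * (k : ℂ) * (x : ℂ))) * (starRingEnd ℂ) (g x) = d k * (starRingEnd ℂ) (g x * Complex.exp (Complex.I * ((-k : ℤ) : ℂ) * (x : ℂ))) := by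
      intro x
      rw [map_mul, ← Complex.exp_conj]
      simp; ring
    simp_rw [this]
    have ec : ∀ G : ℝ → ℂ, ∫ x in (-π)..π, (starRingEnd ℂ) (G x) = (starRingEnd ℂ) (∫ x in (-π)..π, G x) := by
      intro G
      simp only [intervalIntegral, map_sub, integral_conj]
    rw [intervalIntegral.integral_const_mul, ec, hcoef]
    simp only [map_mul, Complex.conj_ofReal, map_ofNat]
    rw [show d k * (2 * (π:ℂ) * (starRingEnd ℂ) (d k)) = 2 * π * (d k * (starRingEnd ℂ) (d k)) by ring, Complex.mul_conj, Complex.normSq_eq_norm_sq]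
    push_cast; ring
  have e2 : ∫ x in (-π)..π, g x * (starRingEnd ℂ) (g x) = ((∫ x in (-π)..π, ‖g x‖ ^ 2 : ℝ) : ℂ) := by
    rw [← intervalIntegral.integral_ofReal]
    congr 1; ext x
    rw [Complex.mul_conj, Complex.normSq_eq_norm_sq]
  simp only [e1] at h
  rw [e2] at h
  exact_mod_cast h

lemma natsum (n : ℕ) (hn : 1 ≤ n) : Summable (fun k : ℕ => 1 / ((n:ℝ) + k) ^ 2) ∧ ∑' k : ℕ, 1 / ((n:ℝ) + k) ^ 2 ≤ 2 / (n:ℝ) := by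
  have hn' : (1:ℝ) ≤ n := by exact_mod_cast hn
  have key : ∀ N : ℕ, ∑ k ∈ Finset.range N, 1 / ((n:ℝ) + k) ^ 2 ≤ 2 / (n:ℝ) := by
    intro N
    suffices h : ∑ k ∈ Finset.range N, 1 / ((n:ℝ) + k) ^ 2 ≤ 2 / (n:ℝ) - 2 / ((n:ℝ) + N) by
      have : (0:ℝ) ≤ 2 / (n + N) := by positivity
      linarith
    induction N with
    | zero => simp
    | succ N ih =>
      rw [Finset.sum_range_succ]
      have hN : (0:ℝ) ≤ N := by positivity
      have : 1 / ((n:ℝ) + N) ^ 2 ≤ 2 / (n + N) - 2 / (n + (N+1)) := by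
        rw [div_sub_div _ _ (by positivity) (by positivity), div_le_div_iff₀ (by positivity) (by positivity)]
        nlinarith [mul_nonneg (show (0:ℝ) ≤ n + N by positivity) (show (0:ℝ) ≤ n + N - 1 by linarith)]
      push_cast
      linarith
  exact ⟨summable_of_sum_range_le (fun _ => by positivity) key, Real.tsum_le_of_sum_range_le (fun _ => by positivity) key⟩

lemma intsum (n : ℕ) (hn : 1 ≤ n) : ∃ s ≤ 4 / (n:ℝ), HasSum (fun k : ℤ => 1 / ((n:ℝ) + |(k:ℝ)|) ^ 2) s := by
  obtain ⟨h1, h2⟩ := natsum n hn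
  have h := HasSum.of_nat_of_neg (f := fun k : ℤ => 1 / ((n:ℝ) + |(k:ℝ)|) ^ 2) (by simpa using h1.hasSum) (by simpa using h1.hasSum)
  refine ⟨_, ?_, h⟩
  have : (0:ℝ) ≤ 1 / ((n:ℝ) + |((0:ℤ):ℝ)|) ^ 2 := by positivity
  simp only [one_div] at h2 this ⊢
  have e : (4:ℝ)/n = 2/n + 2/n := by ring
  linarith

lemma wsum (n : ℕ) (hn : 1 ≤ n) (m : ℤ) (hm : ¬ (n:ℤ) ∣ m) :
    ∑ i ∈ Finset.range n, Complex.exp (Complex.I * (m : ℂ) * ((-π + 2 * π * i / n : ℝ) : ℂ)) = 0 := by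
  have hn0 : (n:ℂ) ≠ 0 := by exact_mod_cast (by omega : n ≠ 0)
  have h1 : ∀ i : ℕ, Complex.exp (Complex.I * (m : ℂ) * ((-π + 2 * π * i / n : ℝ) : ℂ)) =
      Complex.exp (-(Complex.I * m * π)) * Complex.exp (m * (2 * π * Complex.I) / n) ^ i := by
    intro i
    rw [← Complex.exp_nat_mul, ← Complex.exp_add]; congr 1; push_cast; field_simp
    try ring
  simp_rw [h1]
  rw [← Finset.mul_sum]
  have h2 : Complex.exp (m * (2 * π * Complex.I) / n) ^ n = 1 := by
    rw [← Complex.exp_nat_mul, mul_div_cancel₀ _ hn0, Complex.exp_int_mul_two_pi_mul_I]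
  have h3 : Complex.exp (m * (2 * π * Complex.I) / n) ≠ 1 := by
    intro h
    obtain ⟨j, hj⟩ := Complex.exp_eq_one_iff.1 h
    apply hm
    refine ⟨j, ?_⟩
    rw [div_eq_iff hn0] at hj
    have : (m:ℂ) * (2 * π * Complex.I) = (n * j : ℂ) * (2 * π * Complex.I) := by rw [hj]; ring
    have := mul_right_cancel₀ Complex.two_pi_I_ne_zero this
    exact_mod_cast this
  rw [geom_sum_eq h3, h2]; simp

lemma coef (n : ℕ) (hn : 1 ≤ n) (a : ℝ) {d : ℤ → ℂ} {g : ℝ → ℂ}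
    (hg : ∀ x : ℝ, HasSum (fun k : ℤ => d k * Complex.exp (Complex.I * (k : ℂ) * (x : ℂ))) (g x))
    (h0 : ∀ i ∈ Finset.range n, g (-π + 2 * π * i / n) = 0)
    (hd : ∀ k : ℤ, (n:ℤ) ≤ 2 * |k| → ‖d k‖ ≤ a / (k:ℝ) ^ 2) (ha : 0 ≤ a) (k : ℤ) (hk : 2 * |k| < n) :
    ‖d k‖ ≤ 4 * a / n ^ 2 * ∑' j : ℤ, 1 / (j:ℝ) ^ 2 := by
  have hn0 : (n:ℂ) ≠ 0 := by exact_mod_cast (by omega : n ≠ 0)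
  set w : ℤ → ℂ := fun m => ∑ i ∈ Finset.range n, Complex.exp (Complex.I * (m : ℂ) * ((-π + 2 * π * i / n : ℝ) : ℂ)) with hw
  have hwn : ∀ m, ‖w m‖ ≤ n := by
    intro m
    refine (norm_sum_le _ _).trans ?_
    simp only [nrm]; simp
  have hw0 : w 0 = n := by simp [hw]
  have hs : HasSum (fun m : ℤ => d m * w (m - k)) 0 := by
    have := hasSum_sum (s := Finset.range n) (fun i _ => (hg (-π + 2 * π * i / n)).mul_right
      (Complex.exp (Complex.I * ((-k : ℤ) : ℂ) * ((-π + 2 * π * i / n : ℝ) : ℂ))))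
    rw [Finset.sum_eq_zero (fun i hi => by rw [h0 i hi, zero_mul])] at this
    refine Eq.mp (congrArg (fun F : ℤ → ℂ => HasSum F 0) (funext fun m => ?_)) this
    symm
    simp only [hw]
    rw [Finset.mul_sum]
    refine Finset.sum_congr rfl fun i _ => ?_
    rw [mul_assoc (d m), ← Complex.exp_add]; congr 2; push_cast; ring
  have hinj : Function.Injective (fun j : ℤ => k + j * n) := by
    intro i j h
    have : i * (n:ℤ) = j * n := by simpa using h
    exact mul_right_cancel₀ (by omega) this
  rw [← hinj.hasSum_iff] at hs
  swap
  · intro m hm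
    rw [show w (m - k) = 0 from wsum n hn _ ?_, mul_zero]
    rintro ⟨j, hj⟩
    exact hm ⟨j, by simp only; rw [mul_comm, ← hj]; ring⟩
  have hs2 := hs.sub (hasSum_ite_eq (0:ℤ) (d k * n))
  have hb : ‖(0:ℂ) - d k * n‖ ≤ n * (4 * a / n ^ 2) * ∑' j : ℤ, 1 / (j:ℝ) ^ 2 := by
    rw [← hs2.tsum_eq]
    refine tsum_of_norm_bounded (((Real.summable_one_div_int_pow (p := 2)).2 (by norm_num)).hasSum.mul_left _) ?_
    intro j
    by_cases hj : j = 0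
    · subst hj; simp [hw0]
    · simp only [Function.comp, hj, if_false, sub_zero, norm_mul]
      have hj1 : 1 ≤ |j| := Int.one_le_abs hj
      have e : |j * (n:ℤ)| = |j| * n := by rw [abs_mul]; simp
      have t : |j * (n:ℤ)| ≤ |k + j * n| + |k| := by
        have := abs_sub (k + j * n) k
        simpa using this
      have hp : |j| * (n:ℤ) ≤ 2 * |k + j * n| := by nlinarith
      have h1 := hd (k + j * n) (by nlinarith)
      have hp' : |(j:ℝ)| * n ≤ 2 * |((k + j * n : ℤ):ℝ)| := by exact_mod_cast hp
      have hjpos : 0 < |(j:ℝ)| := abs_pos.2 (by exact_mod_cast hj)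
      have hnpos : (0:ℝ) < n := by exact_mod_cast hn
      have h2 : a / ((k + j * n : ℤ):ℝ) ^ 2 ≤ a / ((|(j:ℝ)| * n / 2) ^ 2) := by
        rw [← sq_abs ((k + j * n : ℤ):ℝ)]
        gcongr
        linarith
      calc _ ≤ a / ((|(j:ℝ)| * n / 2) ^ 2) * n := by
            gcongr
            · exact h1.trans h2
            · exact hwn _
        _ = _ := by
          rw [← sq_abs (j:ℝ)]
          field_simp
          norm_num
  rw [zero_sub, norm_neg, norm_mul, Complex.norm_natCast] at hb
  have hnpos : (0:ℝ) < n := by exact_mod_cast hn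
  refine le_of_mul_le_mul_right ?_ hnpos
  linarith

/-- Univariate uniform-sampling error theorem: there is an absolute constant `C` such that
if a `2π`-periodic function `φ` has Fourier coefficients `ζ_k` with `|ζ_k| ≤ a/k²` for
`k ≠ 0`, and a trigonometric polynomial `f` of degree `K` agrees with `φ` at the
`n ≥ 2K+1` equispaced points `x_i = -π + 2πi/n`, then
`‖f − φ‖²_{L²[-π,π]} ≤ C a²/n³`. -/
theorem univariate_uniform_sampling_error :
    ∃ C : ℝ, 0 < C ∧ ∀ (a : ℝ) (K n : ℕ) (c ζ : ℤ → ℂ) (f φ : ℝ → ℂ),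
      2 * K + 1 ≤ n →
      (∀ x : ℝ, φ (x + 2 * π) = φ x) →
      (∀ x : ℝ, HasSum (fun k : ℤ => ζ k * Complex.exp (Complex.I * (k : ℂ) * (x : ℂ))) (φ x)) →
      (∀ k : ℤ, k ≠ 0 → ‖ζ k‖ ≤ a / ((k : ℝ) ^ 2)) →
      (∀ x : ℝ, f x = ∑ k ∈ Finset.Icc (-(K : ℤ)) (K : ℤ),
        c k * Complex.exp (Complex.I * (k : ℂ) * (x : ℂ))) →
      (∀ i ∈ Finset.range n, f (-π + 2 * π * i / n) = φ (-π + 2 * π * i / n)) →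
      ∫ x in (-π)..π, ‖f x - φ x‖ ^ 2 ≤ C * a ^ 2 / (n : ℝ) ^ 3 := by
  set S : ℝ := ∑' j : ℤ, 1 / (j:ℝ) ^ 2 with hS
  have hS0 : 0 ≤ S := tsum_nonneg fun j => by positivity
  refine ⟨2 * π * (9 * (S + 1)) ^ 2 * 4, by positivity, ?_⟩
  intro a K n c ζ f φ hKn _ hφ hζ hf hs
  have hn : 1 ≤ n := by omega
  have hnpos : (0:ℝ) < n := by exact_mod_cast hn
  have ha : 0 ≤ a := by
    have := (norm_nonneg _).trans (hζ 1 one_ne_zero)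
    simpa using this
  set d : ℤ → ℂ := fun k => (if k ∈ Finset.Icc (-(K : ℤ)) (K : ℤ) then c k else 0) - ζ k with hd
  have hg : ∀ x : ℝ, HasSum (fun k : ℤ => d k * Complex.exp (Complex.I * (k : ℂ) * (x : ℂ))) (f x - φ x) := by
    intro x
    have h1 : HasSum (fun k : ℤ => (if k ∈ Finset.Icc (-(K : ℤ)) (K : ℤ) then c k else 0) * Complex.exp (Complex.I * (k : ℂ) * (x : ℂ))) (f x) := by
      rw [hf x, Finset.sum_congr rfl (g := fun k : ℤ => (if k ∈ Finset.Icc (-(K : ℤ)) (K : ℤ) then c k else 0) * Complex.exp (Complex.I * (k : ℂ) * (x : ℂ))) (fun k hk => by rw [if_pos hk])]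
      exact hasSum_sum_of_ne_finset_zero (fun k hk => by rw [if_neg hk, zero_mul])
    have h2 := h1.sub (hφ x)
    simp only [← sub_mul] at h2
    exact h2
  have hdb : ∀ k : ℤ, (n:ℤ) ≤ 2 * |k| → ‖d k‖ ≤ a / (k:ℝ) ^ 2 := by
    intro k hk
    have hK : (K:ℤ) < |k| := by omega
    have : k ∉ Finset.Icc (-(K : ℤ)) (K : ℤ) := by
      rw [Finset.mem_Icc, ← abs_le]; omega
    simp only [hd, if_neg this, zero_sub, norm_neg]
    exact hζ k (by rintro rfl; simp at hK; omega)
  have hM : ∀ k : ℤ, ‖d k‖ ≤ 9 * (S + 1) * a * (1 / ((n:ℝ) + |(k:ℝ)|) ^ 2) := by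
    intro k
    by_cases hk : 2 * |k| < n
    · have hk' : 2 * |(k:ℝ)| < n := by exact_mod_cast hk
      refine (coef n hn a hg (fun i hi => by rw [hs i hi, sub_self]) hdb ha k hk).trans ?_
      rw [← hS]
      have : 4 / (n:ℝ) ^ 2 ≤ 9 * (1 / ((n:ℝ) + |(k:ℝ)|) ^ 2) := by
        rw [mul_one_div, div_le_div_iff₀ (by positivity) (by positivity)]
        have : ((n:ℝ) + |(k:ℝ)|) ^ 2 ≤ (3 / 2 * n) ^ 2 := by gcongr; linarith
        nlinarith
      calc 4 * a / (n:ℝ) ^ 2 * S = S * a * (4 / (n:ℝ) ^ 2) := by ring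
        _ ≤ (S + 1) * a * (9 * (1 / ((n:ℝ) + |(k:ℝ)|) ^ 2)) := by
          gcongr; linarith
        _ = _ := by ring
    · push Not at hk
      have hk' : (n:ℝ) ≤ 2 * |(k:ℝ)| := by exact_mod_cast hk
      refine (hdb k hk).trans ?_
      have hkp : 0 < |(k:ℝ)| := by linarith
      have : 1 / (k:ℝ) ^ 2 ≤ 9 * (1 / ((n:ℝ) + |(k:ℝ)|) ^ 2) := by
        rw [← sq_abs (k:ℝ), mul_one_div, div_le_div_iff₀ (by positivity) (by positivity)]
        have : ((n:ℝ) + |(k:ℝ)|) ^ 2 ≤ (3 * |(k:ℝ)|) ^ 2 := by gcongr; linarith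
        nlinarith
      calc a / (k:ℝ) ^ 2 = 1 * a * (1 / (k:ℝ) ^ 2) := by ring
        _ ≤ (S + 1) * a * (9 * (1 / ((n:ℝ) + |(k:ℝ)|) ^ 2)) := by
          gcongr; linarith
        _ = _ := by ring
  obtain ⟨s, hs4, hss⟩ := intsum n hn
  have hsum : Summable fun k => ‖d k‖ :=
    Summable.of_nonneg_of_le (fun _ => norm_nonneg _) hM (hss.summable.mul_left _)
  have hp := parseval hsum hg
  have hle := hasSum_le (fun k => ?_) hp (hss.mul_left (2 * π * (9 * (S + 1)) ^ 2 * a ^ 2 / n ^ 2))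
  · refine hle.trans ?_
    calc _ ≤ 2 * π * (9 * (S + 1)) ^ 2 * a ^ 2 / n ^ 2 * (4 / (n:ℝ)) := by gcongr
      _ = _ := by field_simp
  · have h1 : ‖d k‖ ^ 2 ≤ (9 * (S + 1) * a * (1 / ((n:ℝ) + |(k:ℝ)|) ^ 2)) ^ 2 := by
      gcongr; exact hM k
    have h2 : 1 / ((n:ℝ) + |(k:ℝ)|) ^ 2 ≤ 1 / (n:ℝ) ^ 2 := by
      gcongr
      linarith [abs_nonneg (k:ℝ)]
    calc 2 * π * ‖d k‖ ^ 2 ≤ 2 * π * (9 * (S + 1) * a * (1 / ((n:ℝ) + |(k:ℝ)|) ^ 2)) ^ 2 := by gcongr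
      _ = 2 * π * (9 * (S + 1)) ^ 2 * a ^ 2 * (1 / ((n:ℝ) + |(k:ℝ)|) ^ 2) * (1 / ((n:ℝ) + |(k:ℝ)|) ^ 2) := by ring
      _ ≤ 2 * π * (9 * (S + 1)) ^ 2 * a ^ 2 * (1 / (n:ℝ) ^ 2) * (1 / ((n:ℝ) + |(k:ℝ)|) ^ 2) := by gcongr
      _ = _ := by ring
end
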